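/- Let m ≥ 1, let l ≥ 2 be an even integer, let 0 ≤ s ≤ 2m-1, and set d = (2^{2lm}-1)/(2^m+1) + 2^s; assume gcd(d, 2^{2lm}-1) = 1. Then there exists a nonzero z in GF(2^{2lm}) such that S_d(z) ≥ 2^{lm+1} (confirming the conjecture of Sarwate et al. for this decimation, with n = 2lm and t = lm). -/

import Mathlib

noncomputable instance (p n : ℕ) [Fact p.Prime] : Fintype (GaloisField p n) :=
  Fintype.ofFinite _

/-- The Weil sum `S_d(z) = ∑_{x ∈ GF(2^n)} (-1)^{Tr(zx + x^d)}`, where `Tr` is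
the absolute trace from `GF(2^n)` to `GF(2)`. -/
noncomputable def binaryWeilSum (n d : ℕ) (z : GaloisField 2 n) : ℤ :=
  ∑ x : GaloisField 2 n,
    (-1 : ℤ) ^ (Algebra.trace (ZMod 2) (GaloisField 2 n) (z * x + x ^ d)).val

/-!
Write `q = 2^m`, `K = (q^(2l) - 1) / (q + 1)`, `χ` for the character `a ↦ (-1)^{Tr a}`, and
`H b = ∑ x, χ (b x^(q+1))`. Squaring `H b` and reducing it modulo `q + 1` gives `H b = (-q)^l`
unless `b = 0` or `b^K = 1`; when `b^K = 1`, the average of `H` over the field forces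
`H b = (-q)^(l+1)`. So `H b` depends only on `b^K`.

The summand `χ (zx + x^(K + 2^s))` has the form `χ (x φ(x^K))`, and `x ↦ x y^(q+1)` preserves `x^K`
for `y ≠ 0`. Averaging over `y` therefore turns `(q + 1) S(z)` into a sum of values of `H` indexed
by the `(q+1)`-th roots of unity `w`. If `z` is itself such a root, the term `w = z` contributes
`H 0 = q^(2l)`. For `l ≥ 3` this outweighs any signs of the other `q` terms, already at `z = 1`.
For `l = 2` none of these terms is negative if `w^(2^s) ≠ (zw)^2` for every `w ≠ z`, and a suitable
`z` exists because the quotients `w^(2^s) / w^2` with `w ≠ 1` are fewer than the squares `z^2`.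
-/

open Finset Polynomial

section CyclicGroup

variable {G M : Type*} [CommGroup G] [IsCyclic G] [Fintype G] [AddCommMonoid M] {k r : ℕ}

theorem range_powMonoidHom_eq_ker (h : k * r = Fintype.card G) :
    (powMonoidHom k : G →* G).range = (powMonoidHom r : G →* G).ker := by
  have hk : 0 < k := Nat.pos_of_mul_pos_right (h ▸ Fintype.card_pos)
  refine Subgroup.eq_of_le_of_card_ge ?_ ?_
  · rintro _ ⟨x, rfl⟩
    rw [MonoidHom.mem_ker, powMonoidHom_apply, powMonoidHom_apply, ← pow_mul, h, pow_card_eq_one]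
  · rw [IsCyclic.card_powMonoidHom_range, IsCyclic.card_powMonoidHom_ker,
      Nat.card_eq_fintype_card, ← h, Nat.gcd_mul_left_left, Nat.gcd_mul_right_left,
      Nat.mul_div_cancel_left _ hk]

theorem card_filter_pow_eq [DecidableEq G] (h : k * r = Fintype.card G) {c : G} (hc : c ^ r = 1) :
    #{x : G | x ^ k = c} = k := by
  have hc' : c ∈ (powMonoidHom k : G →* G).range := range_powMonoidHom_eq_ker h ▸ hc
  calc #{x : G | x ^ k = c}
    _ = #{x : G | x ^ k = 1} :=
      MonoidHom.card_fiber_eq_of_mem_range (powMonoidHom k : G →* G) hc' ⟨1, map_one _⟩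
    _ = Nat.card (powMonoidHom k : G →* G).ker := by
      rw [← Fintype.card_subtype, ← Nat.card_eq_fintype_card]
      rfl
    _ = k := by
      rw [IsCyclic.card_powMonoidHom_ker, Nat.card_eq_fintype_card, ← h, Nat.gcd_mul_right_left]

theorem sum_comp_pow_eq_nsmul_sum [DecidableEq G] (h : k * r = Fintype.card G) (f : G → M) :
    ∑ x : G, f (x ^ k) = k • ∑ c : G with c ^ r = 1, f c := by
  have himage : univ.image (fun x : G ↦ x ^ k) = univ.filter fun c : G ↦ c ^ r = 1 := by
    ext c
    simpa [MonoidHom.mem_ker] using SetLike.ext_iff.mp (range_powMonoidHom_eq_ker h) c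
  rw [Finset.sum_comp, himage, ← sum_nsmul]
  exact sum_congr rfl fun c hc ↦ by rw [card_filter_pow_eq h (mem_filter.mp hc).2]

end CyclicGroup

section FiniteField

variable {F M : Type*} [Field F] [Fintype F] [AddCommMonoid M] {k r : ℕ}

theorem sum_eq_add_sum_units [DecidableEq F] (f : F → M) :
    ∑ x, f x = f 0 + ∑ x : Fˣ, f x := by
  rw [Fintype.sum_eq_add_sum_subtype_ne f 0, ← unitsEquivNeZero.sum_comp]
  rfl

theorem pos_of_mul_add_one_eq_card (h : k * r + 1 = Fintype.card F) : 0 < k ∧ 0 < r := by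
  have := Fintype.one_lt_card (α := F)
  exact CanonicallyOrderedAdd.mul_pos.mp (by omega)

theorem sum_comp_pow_eq_add_nsmul_sum (h : k * r + 1 = Fintype.card F) (f : F → M) :
    ∑ x, f (x ^ k) = f 0 + k • ∑ u ∈ nthRootsFinset r (1 : F), f u := by
  classical
  obtain ⟨hk, hr⟩ := pos_of_mul_add_one_eq_card h
  have hunits : k * r = Fintype.card Fˣ := by rw [Fintype.card_units, ← h, Nat.add_sub_cancel]
  have hroots : ∑ c : Fˣ with c ^ r = 1, f c = ∑ u ∈ nthRootsFinset r (1 : F), f u := by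
    refine sum_nbij (↑) (fun c hc ↦ ?_) (fun _ _ _ _ ↦ Units.ext) (fun u hu ↦ ?_) fun _ _ ↦ rfl
    · rw [mem_nthRootsFinset hr, ← Units.val_pow_eq_pow_val, (mem_filter.mp hc).2, Units.val_one]
    · have hu0 : u ≠ 0 := ne_zero_of_mem_nthRootsFinset one_ne_zero hu
      refine ⟨Units.mk0 u hu0, ?_, rfl⟩
      simpa [Units.ext_iff] using (mem_nthRootsFinset hr 1).mp hu
  rw [sum_eq_add_sum_units, zero_pow hk.ne', ← hroots,
    ← sum_comp_pow_eq_nsmul_sum hunits fun c : Fˣ ↦ f c]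
  simp only [Units.val_pow_eq_pow_val]

theorem card_nthRootsFinset_one (h : k * r + 1 = Fintype.card F) :
    #(nthRootsFinset r (1 : F)) = r := by
  have hcount := sum_comp_pow_eq_add_nsmul_sum h fun _ : F ↦ 1
  simp only [sum_const, card_univ, smul_eq_mul, mul_one, ← h] at hcount
  exact Nat.eq_of_mul_eq_mul_left (pos_of_mul_add_one_eq_card h).1 (by omega)

theorem exists_pow_eq_of_pow_eq_one (h : k * r + 1 = Fintype.card F) {b : F} (hb : b ^ r = 1) :
    ∃ c ≠ 0, c ^ k = b := by
  classical
  have hb0 : b ≠ 0 := by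
    rintro rfl
    simp [(pos_of_mul_add_one_eq_card h).2.ne'] at hb
  have hunits : k * r = Fintype.card Fˣ := by rw [Fintype.card_units, ← h, Nat.add_sub_cancel]
  have hmem : Units.mk0 b hb0 ∈ (powMonoidHom k : Fˣ →* Fˣ).range :=
    range_powMonoidHom_eq_ker hunits ▸ Units.ext hb
  obtain ⟨c, hc⟩ := hmem
  exact ⟨c, c.ne_zero, congrArg Units.val hc⟩

end FiniteField

section Cofactor

variable {F : Type*} [Field F] [Fintype F] {q l : ℕ}

/-- The integer `(q^(2l) - 1) / (q + 1)`, written without division. -/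
def cofactor (q l : ℕ) : ℕ := (q - 1) * ∑ i ∈ range l, (q ^ 2) ^ i

theorem succ_mul_cofactor_add_one (hq : q ≠ 0) (l : ℕ) :
    (q + 1) * cofactor q l + 1 = q ^ (2 * l) := by
  have hgeom := geom_sum_mul_of_one_le (Nat.one_le_pow 2 q (Nat.pos_of_ne_zero hq)) l
  calc (q + 1) * cofactor q l + 1
    _ = (∑ i ∈ range l, (q ^ 2) ^ i) * (q ^ 2 - 1) + 1 := by
      rw [cofactor, show q ^ 2 - 1 = (q + 1) * (q - 1) from Nat.sq_sub_sq q 1]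
      ring
    _ = q ^ (2 * l) := by
      rw [hgeom, ← pow_mul, Nat.sub_add_cancel (Nat.one_le_pow _ q (Nat.pos_of_ne_zero hq))]

theorem pow_sub_one_div_succ_eq_cofactor (hq : q ≠ 0) (l : ℕ) :
    (q ^ (2 * l) - 1) / (q + 1) = cofactor q l := by
  rw [← succ_mul_cofactor_add_one hq, Nat.add_sub_cancel, Nat.mul_div_cancel_left _ q.succ_pos]

theorem two_le_of_card_eq_pow {n : ℕ} (hF : Fintype.card F = q ^ n) : 2 ≤ q := by
  by_contra! hlt
  have hone : 1 < q ^ n := hF ▸ Fintype.one_lt_card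
  exact hone.not_ge (pow_le_one' (Nat.le_of_lt_succ hlt) n)

theorem succ_mul_cofactor_add_one_eq_card (hF : Fintype.card F = q ^ (2 * l)) :
    (q + 1) * cofactor q l + 1 = Fintype.card F := by
  have hq := two_le_of_card_eq_pow hF
  rw [hF, succ_mul_cofactor_add_one (by omega)]

theorem cofactor_pos (hF : Fintype.card F = q ^ (2 * l)) : 0 < cofactor q l :=
  (pos_of_mul_add_one_eq_card (succ_mul_cofactor_add_one_eq_card hF)).2

theorem mul_add_mul_pow_pow_ne_zero [CharP F 2] (hF : Fintype.card F = q ^ (2 * l)) {b h : F}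
    (hb : b ≠ 0) (hbK : b ^ cofactor q l ≠ 1) (hh : h ≠ 0) : b * h + (b * h ^ q) ^ q ≠ 0 := by
  intro hsum
  have hq : q - 1 + 1 = q := Nat.sub_add_cancel (one_le_two.trans (two_le_of_card_eq_pow hF))
  have hroot : (b * h ^ (q + 1)) ^ (q - 1) = 1 := by
    refine mul_left_cancel₀ (mul_ne_zero hb hh) ?_
    calc b * h * (b * h ^ (q + 1)) ^ (q - 1)
      _ = b ^ (q - 1 + 1) * h ^ ((q + 1) * (q - 1) + 1) := by ring
      _ = (b * h ^ q) ^ q := by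
        rw [show (q + 1) * (q - 1) + 1 = q * q by nth_rw 1 3 4 [← hq]; ring, hq]
        ring
      _ = b * h * 1 := by rw [mul_one, CharTwo.add_eq_zero.mp hsum]
  refine hbK ?_
  calc b ^ cofactor q l
    _ = (b * h ^ (q + 1)) ^ cofactor q l := by
      rw [mul_pow, ← pow_mul, Nat.eq_sub_of_add_eq (succ_mul_cofactor_add_one_eq_card hF),
        FiniteField.pow_card_sub_one_eq_one h hh, mul_one]
    _ = 1 := by rw [cofactor, pow_mul, hroot, one_pow]

end Cofactor

theorem sum_sq_pow_modEq (q l : ℕ) : ∑ i ∈ range l, (q ^ 2) ^ i ≡ l [MOD q + 1] := by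
  have hsq : q ^ 2 ≡ 1 [MOD q + 1] :=
    (Nat.modEq_iff_dvd.mpr ⟨q - 1, by push_cast; ring⟩ : 1 ≡ q ^ 2 [MOD q + 1]).symm
  calc ∑ i ∈ range l, (q ^ 2) ^ i
    _ ≡ ∑ i ∈ range l, 1 ^ i [MOD q + 1] := Nat.ModEq.sum fun i _ ↦ hsq.pow i
    _ = l := by simp

theorem add_pow_cofactor_mul_mul_pow {F : Type*} [Field F] [CharP F 2] {q m : ℕ} (hq : q = 2 ^ m)
    {v w : F} (hv : v ^ (q + 1) = 1) (hw : w ^ (q + 1) = 1) (hvw : v ≠ w) (l : ℕ) :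
    (v + w) ^ cofactor q l * (v * w) ^ l = 1 := by
  have hne : v + w ≠ 0 := mt CharTwo.add_eq_zero.mp hvw
  have hpred : q - 1 + 1 = q := Nat.sub_add_cancel (hq ▸ Nat.one_le_two_pow)
  have hinv : (v + w) ^ (q - 1) * (v * w) = 1 := by
    refine mul_right_cancel₀ hne ?_
    calc (v + w) ^ (q - 1) * (v * w) * (v + w)
      _ = (v + w) ^ (q - 1 + 1) * (v * w) := by ring
      _ = (v ^ q + w ^ q) * (v * w) := by rw [hpred, hq, add_pow_char_pow]
      _ = v ^ (q + 1) * w + w ^ (q + 1) * v := by ring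
      _ = 1 * (v + w) := by rw [hv, hw]; ring
  have hroot : (v * w) ^ (q + 1) = 1 := by rw [mul_pow, hv, hw, one_mul]
  rw [← pow_eq_pow_of_modEq (sum_sq_pow_modEq q l) hroot, cofactor, pow_mul, ← mul_pow, hinv,
    one_pow]

theorem exists_mem_forall_ne_pow_ne_mul_sq {F : Type*} [Field F] [CharP F 2] {A : Finset F}
    (hone : 1 ∈ A) (hzero : 0 ∉ A) (e : ℕ) :
    ∃ v ∈ A, ∀ w ∈ A, w ≠ v → w ^ e ≠ (v * w) ^ 2 := by
  classical
  have hcard : #((A.erase 1).image fun w ↦ w ^ e / w ^ 2) < #(A.image (· ^ 2)) :=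
    calc #((A.erase 1).image fun w ↦ w ^ e / w ^ 2)
      _ ≤ #(A.erase 1) := card_image_le
      _ < #A := card_erase_lt_of_mem hone
      _ = #(A.image (· ^ 2)) := (card_image_of_injective A CharTwo.sq_injective).symm
  obtain ⟨_, hmem, hnotMem⟩ := exists_mem_notMem_of_card_lt_card hcard
  obtain ⟨v, hv, rfl⟩ := mem_image.mp hmem
  refine ⟨v, hv, fun w hw hwv heq ↦ ?_⟩
  have hw0 : w ≠ 0 := ne_of_mem_of_not_mem hw hzero
  have hquot : w ^ e / w ^ 2 = v ^ 2 := by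
    rw [heq, mul_pow, mul_div_cancel_right₀ _ (pow_ne_zero 2 hw0)]
  by_cases hw1 : w = 1
  · subst hw1
    exact hwv (CharTwo.sq_injective (by simpa using heq))
  · exact hnotMem (mem_image.mpr ⟨w, mem_erase.mpr ⟨hw1, hw⟩, hquot⟩)

section TraceCharacter

variable {F : Type*} [Field F] [Algebra (ZMod 2) F]

variable (F) in
/-- The canonical additive character `a ↦ (-1)^{Tr a}` of a field of characteristic two, with
values in `ℤ` so that its sums can be compared in order and reduced modulo integers. -/
noncomputable def traceChar : AddChar F ℤ :=
  (AddChar.zmodChar 2 (neg_one_sq : (-1 : ℤ) ^ 2 = 1)).compAddMonoidHom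
    (Algebra.trace (ZMod 2) F).toAddMonoidHom

theorem traceChar_apply (a : F) : traceChar F a = (-1) ^ (Algebra.trace (ZMod 2) F a).val := rfl

variable [Finite F]

theorem traceChar_isPrimitive : (traceChar F).IsPrimitive := by
  obtain ⟨y, hy⟩ := Algebra.trace_surjective (ZMod 2) F 1
  refine AddChar.IsPrimitive.of_ne_one (AddChar.ne_one_iff.mpr ⟨y, ?_⟩)
  rw [traceChar_apply, hy, ZMod.val_one, pow_one]
  decide

theorem traceChar_pow_two_pow (a : F) (k : ℕ) : traceChar F (a ^ 2 ^ k) = traceChar F a := by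
  induction k with
  | zero => rw [pow_zero, pow_one]
  | succ k ih =>
    rw [pow_succ, pow_mul, ← ih, traceChar_apply, traceChar_apply]
    congr 2
    simpa [ZMod.card] using Algebra.trace_eq_of_algEquiv
      (FiniteField.frobeniusAlgEquivOfAlgebraic (ZMod 2) F) (a ^ 2 ^ k)

end TraceCharacter

section HermitianSum

variable {F : Type*} [Field F] [Fintype F] [Algebra (ZMod 2) F] {q m l : ℕ}

/-- The exponential sum `∑ x, (-1)^{Tr(b x^(q+1))}` of a Hermitian monomial: when `F` contains the
field with `q²` elements, `x ↦ x^(q+1)` extends the norm from that field to its subfield with `q`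
elements. -/
noncomputable def hermitianSum (q : ℕ) (b : F) : ℤ := ∑ x : F, traceChar F (b * x ^ (q + 1))

theorem hermitianSum_zero : hermitianSum q (0 : F) = Fintype.card F := by
  simp [hermitianSum]

theorem hermitianSum_pow {c : F} (hc : c ≠ 0) :
    hermitianSum q (c ^ (q + 1)) = hermitianSum q (1 : F) := by
  simp only [hermitianSum, ← mul_pow, one_mul]
  exact Equiv.sum_comp (Equiv.mulLeft₀ c hc) fun x ↦ traceChar F (x ^ (q + 1))

theorem sum_hermitianSum : ∑ b : F, hermitianSum q b = Fintype.card F := by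
  classical
  unfold hermitianSum
  rw [sum_comm]
  simp [AddChar.sum_mulShift _ traceChar_isPrimitive]

theorem succ_dvd_hermitianSum_sub_one {K : ℕ} (h : (q + 1) * K + 1 = Fintype.card F) (b : F) :
    (q + 1 : ℤ) ∣ hermitianSum q b - 1 := by
  refine ⟨∑ u ∈ nthRootsFinset K (1 : F), traceChar F (b * u), ?_⟩
  rw [hermitianSum, sum_comp_pow_eq_add_nsmul_sum h fun y ↦ traceChar F (b * y), mul_zero,
    AddChar.map_zero_eq_one, nsmul_eq_mul]
  push_cast
  ring

theorem sum_traceChar_mul_pow_add_mul_eq_zero {a c : F} (h : a + c ^ 2 ^ m ≠ 0) :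
    ∑ x, traceChar F (a * x ^ 2 ^ m + c * x) = 0 := by
  classical
  have : CharP F 2 := charP_of_injective_algebraMap' (ZMod 2) 2
  have hlinear (x : F) :
      traceChar F (a * x ^ 2 ^ m + c * x) = traceChar F (x ^ 2 ^ m * (a + c ^ 2 ^ m)) := by
    rw [AddChar.map_add_eq_mul, ← traceChar_pow_two_pow (c * x) m, ← AddChar.map_add_eq_mul]
    congr 1
    ring
  simp only [hlinear]
  calc ∑ x, traceChar F (x ^ 2 ^ m * (a + c ^ 2 ^ m))
    _ = ∑ y, traceChar F (y * (a + c ^ 2 ^ m)) :=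
      Fintype.sum_bijective (iterateFrobenius F 2 m) (bijective_iterateFrobenius F 2 m) _ _
        fun x ↦ by rw [iterateFrobenius_def]
    _ = 0 := by rw [AddChar.sum_mulShift _ traceChar_isPrimitive, if_neg h, Nat.cast_zero]

theorem hermitianSum_sq (hq : q = 2 ^ m) {b : F}
    (hb : ∀ h ≠ 0, b * h + (b * h ^ q) ^ q ≠ 0) : hermitianSum q b ^ 2 = Fintype.card F := by
  subst hq
  have : CharP F 2 := charP_of_injective_algebraMap' (ZMod 2) 2
  set q := 2 ^ m
  have hshift (h x : F) : b * x ^ (q + 1) + b * (x + h) ^ (q + 1) =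
      b * h ^ (q + 1) + (b * h * x ^ q + b * h ^ q * x) := by
    rw [pow_succ (x + h), add_pow_char_pow x h 2 m]
    linear_combination b * x ^ (q + 1) * CharTwo.two_eq_zero (R := F)
  calc hermitianSum q b ^ 2
    _ = ∑ x : F, ∑ h : F, traceChar F (b * x ^ (q + 1) + b * (x + h) ^ (q + 1)) := by
      rw [sq, hermitianSum, sum_mul_sum]
      refine sum_congr rfl fun x _ ↦ ?_
      simp only [AddChar.map_add_eq_mul]
      exact (Equiv.sum_comp (Equiv.addLeft x) fun y ↦
        traceChar F (b * x ^ (q + 1)) * traceChar F (b * y ^ (q + 1))).symm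
    _ = ∑ h : F, traceChar F (b * h ^ (q + 1)) *
          ∑ x : F, traceChar F (b * h * x ^ q + b * h ^ q * x) := by
      rw [sum_comm]
      simp only [hshift, AddChar.map_add_eq_mul _ (b * _ ^ (q + 1)), mul_sum]
    _ = Fintype.card F := by
      rw [sum_eq_single 0]
      · simp [q]
      · intro h _ hh
        rw [sum_traceChar_mul_pow_add_mul_eq_zero (hb h hh), mul_zero]
      · simp

theorem hermitianSum_of_pow_cofactor_ne_one (hq : q = 2 ^ m) (hF : Fintype.card F = q ^ (2 * l))
    {b : F} (hb : b ≠ 0) (hbK : b ^ cofactor q l ≠ 1) : hermitianSum q b = (-q) ^ l := by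
  have : CharP F 2 := charP_of_injective_algebraMap' (ZMod 2) 2
  have hq2 : 2 ≤ q := two_le_of_card_eq_pow hF
  have hsq : hermitianSum q b ^ 2 = ((-q : ℤ) ^ l) ^ 2 := by
    rw [hermitianSum_sq hq fun h hh ↦ mul_add_mul_pow_pow_ne_zero hF hb hbK hh, hF, ← pow_mul,
      mul_comm l, Even.neg_pow (even_two_mul l), Nat.cast_pow]
  refine (sq_eq_sq_iff_eq_or_eq_neg.mp hsq).resolve_right fun hneg ↦ ?_
  have hsum : (q + 1 : ℤ) ∣ hermitianSum q b - 1 :=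
    succ_dvd_hermitianSum_sub_one (succ_mul_cofactor_add_one_eq_card hF) b
  have hpow : (q + 1 : ℤ) ∣ (-q) ^ l - 1 :=
    dvd_trans ⟨-1, by ring⟩ (sub_one_dvd_pow_sub_one (-q : ℤ) l)
  have htwo : (q + 1 : ℤ) ∣ 2 := by
    have hsub : -((-q : ℤ) ^ l - 1 + (hermitianSum q b - 1)) = 2 := by
      rw [hneg]
      ring
    exact hsub ▸ (dvd_add hpow hsum).neg_right
  have := Int.le_of_dvd two_pos htwo
  omega

theorem hermitianSum_one (hq : q = 2 ^ m) (hF : Fintype.card F = q ^ (2 * l)) :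
    hermitianSum q (1 : F) = (-q) ^ (l + 1) := by
  classical
  have hcard := succ_mul_cofactor_add_one_eq_card hF
  have hK : 0 < cofactor q l := cofactor_pos hF
  set μ : Finset F := nthRootsFinset (cofactor q l) 1
  have hzero : (0 : F) ∉ μ := fun h ↦ ne_zero_of_mem_nthRootsFinset one_ne_zero h rfl
  have hμ : ∀ b ∈ μ, hermitianSum q b = hermitianSum q (1 : F) := by
    intro b hb
    obtain ⟨c, hc, rfl⟩ := exists_pow_eq_of_pow_eq_one hcard
      ((mem_nthRootsFinset hK 1).mp hb)
    exact hermitianSum_pow hc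
  have hoff : ∀ b ∉ insert 0 μ, hermitianSum q b - (-q : ℤ) ^ l = 0 := by
    intro b hb
    obtain ⟨hb0, hbμ⟩ := not_or.mp (mt mem_insert.mpr hb)
    rw [hermitianSum_of_pow_cofactor_ne_one hq hF hb0 (mt (mem_nthRootsFinset hK 1).mpr hbμ),
      sub_self]
  have hcount : Fintype.card F - Fintype.card F * (-q : ℤ) ^ l =
      Fintype.card F - (-q) ^ l + cofactor q l * (hermitianSum q (1 : F) - (-q) ^ l) :=
    calc Fintype.card F - Fintype.card F * (-q : ℤ) ^ l
      _ = ∑ b : F, (hermitianSum q b - (-q) ^ l) := by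
        rw [sum_sub_distrib, sum_hermitianSum, sum_const, card_univ, nsmul_eq_mul]
      _ = ∑ b ∈ insert 0 μ, (hermitianSum q b - (-q) ^ l) :=
        (sum_subset (subset_univ _) fun b _ hb ↦ hoff b hb).symm
      _ = Fintype.card F - (-q) ^ l + cofactor q l * (hermitianSum q (1 : F) - (-q) ^ l) := by
        rw [sum_insert hzero, hermitianSum_zero, sum_congr rfl fun b hb ↦ by rw [hμ b hb],
          sum_const, card_nthRootsFinset_one hcard, nsmul_eq_mul]
  have hcardZ : (Fintype.card F : ℤ) = (q + 1) * cofactor q l + 1 := by exact_mod_cast hcard.symm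
  refine mul_left_cancel₀ (Nat.cast_ne_zero.mpr hK.ne' : (cofactor q l : ℤ) ≠ 0) ?_
  rw [hcardZ] at hcount
  linear_combination -hcount

end HermitianSum

section HermitianValue

variable {R : Type*} [Zero R] [One R] {q l : ℕ}

open Classical in
/-- The value of `hermitianSum q b` over the field with `q^(2l)` elements, as a function of
`c = b ^ cofactor q l`. -/
noncomputable def hermitianValue (q l : ℕ) (c : R) : ℤ :=
  if c = 0 then q ^ (2 * l) else if c = 1 then (-q) ^ (l + 1) else (-q) ^ l

theorem hermitianValue_zero : hermitianValue q l (0 : R) = q ^ (2 * l) := if_pos rfl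

theorem neg_pow_le_hermitianValue_of_odd (hl : Odd l) (c : R) :
    -(q : ℤ) ^ l ≤ hermitianValue q l c := by
  have hpow (n : ℕ) : 0 ≤ (q : ℤ) ^ n := by positivity
  unfold hermitianValue
  rw [hl.neg_pow, hl.add_one.neg_pow]
  split_ifs <;> linarith [hpow l, hpow (l + 1), hpow (2 * l)]

theorem neg_pow_succ_le_hermitianValue_of_even (hl : Even l) (c : R) :
    -(q : ℤ) ^ (l + 1) ≤ hermitianValue q l c := by
  have hpow (n : ℕ) : 0 ≤ (q : ℤ) ^ n := by positivity
  unfold hermitianValue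
  rw [hl.neg_pow, hl.add_one.neg_pow]
  split_ifs <;> linarith [hpow l, hpow (l + 1), hpow (2 * l)]

theorem pow_le_hermitianValue_of_even_of_ne_one (hq : 1 ≤ q) (hl : Even l) {c : R} (hc : c ≠ 1) :
    (q : ℤ) ^ l ≤ hermitianValue q l c := by
  unfold hermitianValue
  rw [if_neg hc, hl.neg_pow]
  split_ifs
  · exact_mod_cast Nat.pow_le_pow_right hq (by omega)
  · exact le_rfl

end HermitianValue

section WeilSum

variable {F : Type*} [Field F] [Fintype F] [Algebra (ZMod 2) F] {q m l s : ℕ}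

theorem hermitianSum_eq_hermitianValue (hq : q = 2 ^ m) (hF : Fintype.card F = q ^ (2 * l))
    (b : F) : hermitianSum q b = hermitianValue q l (b ^ cofactor q l) := by
  have hK : cofactor q l ≠ 0 := (cofactor_pos hF).ne'
  unfold hermitianValue
  split_ifs with hzero hone
  · rw [pow_eq_zero_iff hK] at hzero
    rw [hzero, hermitianSum_zero, hF, Nat.cast_pow]
  · obtain ⟨c, hc, rfl⟩ := exists_pow_eq_of_pow_eq_one
      (succ_mul_cofactor_add_one_eq_card hF) hone
    rw [hermitianSum_pow hc, hermitianSum_one hq hF]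
  · exact hermitianSum_of_pow_cofactor_ne_one hq hF (mt (pow_eq_zero_iff hK).mpr hzero) hone

theorem sum_hermitianSum_mul_comp_pow {K : ℕ} (h : (q + 1) * K + 1 = Fintype.card F)
    (φ : F → F) : ∑ x : F, hermitianSum q (x * φ (x ^ K)) =
      Fintype.card F + (q + 1) * K * ∑ x : F, traceChar F (x * φ (x ^ K)) := by
  classical
  have hsubst (y : Fˣ) : ∑ x : F, traceChar F (x * φ (x ^ K) * (y : F) ^ (q + 1)) =
      ∑ x : F, traceChar F (x * φ (x ^ K)) := by
    have hy : ((y : F) ^ (q + 1)) ^ K = 1 := by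
      rw [← pow_mul, Nat.eq_sub_of_add_eq h, FiniteField.pow_card_sub_one_eq_one _ y.ne_zero]
    rw [← Equiv.sum_comp (Equiv.mulRight₀ _ (pow_ne_zero (q + 1) y.ne_zero)) fun x ↦
      traceChar F (x * φ (x ^ K))]
    refine sum_congr rfl fun x _ ↦ ?_
    rw [Equiv.mulRight₀_apply, mul_pow, hy, mul_one, mul_right_comm]
  have hunits : (Fintype.card Fˣ : ℤ) = (q + 1) * K := by
    rw [Fintype.card_units, ← h, Nat.add_sub_cancel]
    push_cast
    rfl
  unfold hermitianSum
  rw [sum_comm, sum_eq_add_sum_units]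
  simp [hsubst, hunits]

/-- The Weil sum `∑ x, (-1)^{Tr(zx + x^d)}` over an arbitrary finite field of characteristic two;
it is `binaryWeilSum` when the field is `GaloisField 2 n`. -/
noncomputable def weilSum (d : ℕ) (z : F) : ℤ := ∑ x : F, traceChar F (z * x + x ^ d)

theorem binaryWeilSum_eq_weilSum (n d : ℕ) (z : GaloisField 2 n) :
    binaryWeilSum n d z = weilSum d z := rfl

theorem weilSum_add_two_pow [CharP F 2] (K s : ℕ) (z : F) :
    weilSum (K + 2 ^ s) z =
      ∑ x : F, traceChar F (x * (z + (iterateFrobeniusEquiv F 2 s).symm (x ^ K))) := by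
  refine sum_congr rfl fun x _ ↦ ?_
  set y := (iterateFrobeniusEquiv F 2 s).symm (x ^ K)
  have hy : y ^ 2 ^ s = x ^ K := (iterateFrobeniusEquiv F 2 s).apply_symm_apply (x ^ K)
  rw [mul_add, AddChar.map_add_eq_mul, AddChar.map_add_eq_mul, mul_comm z,
    ← traceChar_pow_two_pow (x * y) s, mul_pow, hy, pow_add, mul_comm (x ^ K)]

theorem succ_mul_weilSum (hq : q = 2 ^ m) (hF : Fintype.card F = q ^ (2 * l)) (z : F) :
    (q + 1) * weilSum (cofactor q l + 2 ^ s) z =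
      ∑ w ∈ nthRootsFinset (q + 1) (1 : F),
        hermitianValue q l (w ^ 2 ^ s * (z + w) ^ cofactor q l) := by
  have : CharP F 2 := charP_of_injective_algebraMap' (ZMod 2) 2
  have hcard := succ_mul_cofactor_add_one_eq_card hF
  set K := cofactor q l
  set μ : Finset F := nthRootsFinset (q + 1) 1
  let σ : F ≃+* F := iterateFrobeniusEquiv F 2 s
  have hmean : ∑ x : F, hermitianSum q (x * (z + σ.symm (x ^ K))) =
      Fintype.card F + K * ∑ u ∈ μ, hermitianValue q l (u * (z + σ.symm u) ^ K) := by
    simp only [hermitianSum_eq_hermitianValue hq hF, mul_pow]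
    rw [sum_comp_pow_eq_add_nsmul_sum (mul_comm (q + 1) K ▸ hcard) fun y ↦
      hermitianValue q l (y * (z + σ.symm y) ^ K), zero_mul, hermitianValue_zero, hF, nsmul_eq_mul,
      Nat.cast_pow]
  have hreindex : ∑ u ∈ μ, hermitianValue q l (u * (z + σ.symm u) ^ K) =
      ∑ w ∈ μ, hermitianValue q l (w ^ 2 ^ s * (z + w) ^ K) := by
    refine sum_equiv σ.symm.toEquiv (fun u ↦ ?_) fun u _ ↦ ?_
    · simp [μ, ← map_pow]
    · have hu : σ.symm u ^ 2 ^ s = u := σ.apply_symm_apply u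
      change _ = hermitianValue q l (σ.symm u ^ 2 ^ s * (z + σ.symm u) ^ K)
      rw [hu]
  have hK : (K : ℤ) ≠ 0 := Nat.cast_ne_zero.mpr (cofactor_pos hF).ne'
  refine mul_left_cancel₀ hK ?_
  rw [sum_hermitianSum_mul_comp_pow hcard fun u ↦ z + σ.symm u, hreindex,
    ← weilSum_add_two_pow] at hmean
  linear_combination hmean

theorem two_mul_pow_le_weilSum_of_le_hermitianValue (hq : q = 2 ^ m)
    (hF : Fintype.card F = q ^ (2 * l)) {v : F} (hv : v ∈ nthRootsFinset (q + 1) (1 : F)) {B : ℤ}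
    (hvalue : ∀ w ∈ nthRootsFinset (q + 1) (1 : F), w ≠ v →
      B ≤ hermitianValue q l (w ^ 2 ^ s * (v + w) ^ cofactor q l))
    (hB : (q + 1) * (2 * q ^ l) ≤ q ^ (2 * l) + q * B) :
    2 * (q : ℤ) ^ l ≤ weilSum (cofactor q l + 2 ^ s) v := by
  classical
  have : CharP F 2 := charP_of_injective_algebraMap' (ZMod 2) 2
  have hcard := succ_mul_cofactor_add_one_eq_card hF
  set μ : Finset F := nthRootsFinset (q + 1) 1
  have hμ : #(μ.erase v) = q := by
    rw [card_erase_of_mem hv, card_nthRootsFinset_one (mul_comm (q + 1) _ ▸ hcard),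
      Nat.add_sub_cancel]
  refine le_of_mul_le_mul_left (hB.trans ?_) (by positivity : (0 : ℤ) < q + 1)
  rw [succ_mul_weilSum hq hF, ← add_sum_erase μ _ hv, CharTwo.add_self_eq_zero,
    zero_pow (cofactor_pos hF).ne', mul_zero, hermitianValue_zero]
  gcongr
  calc (q : ℤ) * B
    _ = #(μ.erase v) • B := by rw [hμ, nsmul_eq_mul]
    _ ≤ _ := card_nsmul_le_sum _ _ _ fun w hw ↦
      hvalue w (mem_of_mem_erase hw) (ne_of_mem_erase hw)

theorem exists_two_mul_sq_le_weilSum (hq : q = 2 ^ m) (hF : Fintype.card F = q ^ (2 * 2)) (s : ℕ) :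
    ∃ v : F, v ≠ 0 ∧ 2 * (q : ℤ) ^ 2 ≤ weilSum (cofactor q 2 + 2 ^ s) v := by
  have : CharP F 2 := charP_of_injective_algebraMap' (ZMod 2) 2
  have hq2 : 2 ≤ q := two_le_of_card_eq_pow hF
  set μ : Finset F := nthRootsFinset (q + 1) 1
  have hmem {w : F} : w ∈ μ ↔ w ^ (q + 1) = 1 := mem_nthRootsFinset q.succ_pos 1
  have hzero : (0 : F) ∉ μ := fun h ↦ ne_zero_of_mem_nthRootsFinset one_ne_zero h rfl
  obtain ⟨v, hv, hfree⟩ := exists_mem_forall_ne_pow_ne_mul_sq (hmem.mpr (one_pow _)) hzero (2 ^ s)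
  have hvalue (w : F) (hw : w ∈ μ) (hwv : w ≠ v) :
      (q : ℤ) ^ 2 ≤ hermitianValue q 2 (w ^ 2 ^ s * (v + w) ^ cofactor q 2) := by
    refine pow_le_hermitianValue_of_even_of_ne_one (by omega) even_two fun hone ↦
      hfree w hw hwv ?_
    have hinv := add_pow_cofactor_mul_mul_pow hq (hmem.mp hv) (hmem.mp hw) hwv.symm 2
    exact mul_left_cancel₀ (left_ne_zero_of_mul_eq_one hinv) (by rw [hinv, mul_comm, hone])
  refine ⟨v, ne_of_mem_of_not_mem hv hzero,
    two_mul_pow_le_weilSum_of_le_hermitianValue hq hF hv hvalue ?_⟩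
  have hq2 : (2 : ℤ) ≤ q := by exact_mod_cast hq2
  calc ((q : ℤ) + 1) * (2 * q ^ 2)
    _ = (q + 1) * q ^ 2 * 2 := by ring
    _ ≤ (q + 1) * q ^ 2 * q := by gcongr
    _ = q ^ (2 * 2) + q * q ^ 2 := by ring

theorem two_mul_pow_le_weilSum_one (hq : q = 2 ^ m) (hF : Fintype.card F = q ^ (2 * l))
    (hl : 3 ≤ l) (s : ℕ) : 2 * (q : ℤ) ^ l ≤ weilSum (cofactor q l + 2 ^ s) (1 : F) := by
  have hone : (1 : F) ∈ nthRootsFinset (q + 1) (1 : F) := by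
    rw [mem_nthRootsFinset q.succ_pos, one_pow]
  have hq2 : (2 : ℤ) ≤ q := by exact_mod_cast two_le_of_card_eq_pow hF
  have hmono {n : ℕ} (hn : n ≤ l) : (q : ℤ) ^ n ≤ q ^ l := pow_le_pow_right₀ (by omega) hn
  have hpow : 0 ≤ (q : ℤ) ^ l := by positivity
  rcases l.even_or_odd with heven | hodd
  · refine two_mul_pow_le_weilSum_of_le_hermitianValue hq hF hone
      (fun w _ _ ↦ neg_pow_succ_le_hermitianValue_of_even heven _) ?_
    have hl4 : 4 ≤ l := by
      obtain ⟨k, rfl⟩ := heven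
      omega
    have hlarge : (q : ℤ) ^ 2 + 2 * q + 2 ≤ q ^ l :=
      calc (q : ℤ) ^ 2 + 2 * q + 2
        _ ≤ 2 ^ 2 * q ^ 2 := by nlinarith
        _ ≤ q ^ 2 * q ^ 2 := by gcongr
        _ = q ^ 4 := by ring
        _ ≤ q ^ l := hmono hl4
    calc ((q : ℤ) + 1) * (2 * q ^ l)
      _ = (q ^ 2 + 2 * q + 2) * q ^ l - q ^ 2 * q ^ l := by ring
      _ ≤ q ^ l * q ^ l - q ^ 2 * q ^ l := by gcongr
      _ = q ^ (2 * l) + q * -q ^ (l + 1) := by ring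
  · refine two_mul_pow_le_weilSum_of_le_hermitianValue hq hF hone
      (fun w _ _ ↦ neg_pow_le_hermitianValue_of_odd hodd _) ?_
    have hlarge : 3 * (q : ℤ) + 2 ≤ q ^ l := by nlinarith [hmono hl, sq_nonneg ((q : ℤ) + 1)]
    calc ((q : ℤ) + 1) * (2 * q ^ l)
      _ = (3 * q + 2) * q ^ l - q * q ^ l := by ring
      _ ≤ q ^ l * q ^ l - q * q ^ l := by gcongr
      _ = q ^ (2 * l) + q * -q ^ l := by ring

theorem exists_two_mul_pow_le_weilSum (hq : q = 2 ^ m) (hF : Fintype.card F = q ^ (2 * l))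
    (hl : 2 ≤ l) (s : ℕ) :
    ∃ z : F, z ≠ 0 ∧ 2 * (q : ℤ) ^ l ≤ weilSum (cofactor q l + 2 ^ s) z := by
  obtain rfl | hl3 := hl.eq_or_lt
  · exact exists_two_mul_sq_le_weilSum hq hF s
  · exact ⟨1, one_ne_zero, two_mul_pow_le_weilSum_one hq hF hl3 s⟩

end WeilSum

theorem weil_sum_large_value_general (m l s : ℕ) (hm : 1 ≤ m) (hl : 2 ≤ l) :
    ∃ z : GaloisField 2 (2 * l * m), z ≠ 0 ∧
      (2 ^ (l * m + 1) : ℤ) ≤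
        binaryWeilSum (2 * l * m) ((2 ^ (2 * l * m) - 1) / (2 ^ m + 1) + 2 ^ s) z := by
  have hpow : 2 ^ (2 * l * m) = (2 ^ m) ^ (2 * l) := by rw [← pow_mul, mul_comm m]
  have hcard : Fintype.card (GaloisField 2 (2 * l * m)) = (2 ^ m) ^ (2 * l) := by
    rw [← Nat.card_eq_fintype_card, GaloisField.card 2 _ (by positivity), hpow]
  obtain ⟨z, hz, hle⟩ := exists_two_mul_pow_le_weilSum rfl hcard hl s
  refine ⟨z, hz, ?_⟩
  rw [binaryWeilSum_eq_weilSum, hpow, pow_sub_one_div_succ_eq_cofactor (by positivity)]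
  calc (2 : ℤ) ^ (l * m + 1)
    _ = 2 * ((2 ^ m : ℕ) : ℤ) ^ l := by
      push_cast
      ring
    _ ≤ weilSum (cofactor (2 ^ m) l + 2 ^ s) z := hle

/-- The conjecture of Sarwate et al. holds for `d = (2^(2lm)-1)/(2^m+1) + 2^s`
with `l ≥ 2` even: there is a nonzero `z` with `S_d(z) ≥ 2^(lm+1)`. -/
theorem weil_sum_large_value (m l s d : ℕ) (hm : 1 ≤ m) (hl : 2 ≤ l) (hle : Even l)
    (hs : s ≤ 2 * m - 1) (hd : d = (2 ^ (2 * l * m) - 1) / (2 ^ m + 1) + 2 ^ s)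
    (hgcd : Nat.gcd d (2 ^ (2 * l * m) - 1) = 1) :
    ∃ z : GaloisField 2 (2 * l * m), z ≠ 0 ∧
      (2 ^ (l * m + 1) : ℤ) ≤ binaryWeilSum (2 * l * m) d z :=
  hd ▸ weil_sum_large_value_general m l s hm hl
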